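/- Let k ≥ 2 and s = (s_0,…,s_{k−1})ᵀ ∈ ℝ^k. There exists a vector p = (p_1,…,p_k) ∈ ℝ^k with Σ_{i=1}^k p_i² = s_0 and 2Σ_{i=1}^{k−m} p_i p_{i+m} = s_m for each m = 1,…,k−1, if and only if Σ_{m=0}^{k−1} s_m T_m(x) ≥ 0 for all x ∈ [−1,1]. -/

import Mathlib

/-!
The statement is the Fejér–Riesz theorem for real cosine polynomials. Put
`f(x) = ∑ s_m T_m(x)` and `P(z) = ∑ p_i z ^ i`. Grouping the terms of
`∑ p_i p_j T_{|i-j|}` by `m = |i - j|` (`sum_sum_dist`) shows that the equations for `p` turn `f` into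
that double sum, whose value is `|P(e ^ {iθ})|²` at `x = cos θ` (`chebT_sum_cos`) and `P(z) P(1/z)`
at `x = (z + 1/z)/2` with `z` real (`chebT_sum_joukowski`). The first formula gives necessity.

For sufficiency it is enough to write `f((z + 1/z)/2) = q(z) q(1/z)` for a real polynomial `q` of
degree at most `deg f` (`exists_spectralFactor`): since the `T_m` are linearly independent, the
coefficients of `q` then solve the system. Such factorizations multiply, so induct on `deg f` by
splitting off a factor that is nonnegative on `[-1, 1]` (`exists_nonneg_factor`). A non-real root
`w` gives `(x - w)(x - w̄)`, a real root `a` in `(-1, 1)` is at least double by a sign change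
argument and gives `(x - a)²`, and a real root outside `(-1, 1)` gives `±(a - x)`. Each of these is
factored explicitly through a solution `v` of `(v + 1/v)/2 = w`, using
`(z - v)(1/z - v) = -2v((z + 1/z)/2 - w)`.
-/

/-- The `m`-th Chebyshev polynomial of the first kind. -/
noncomputable def chebT : ℕ → ℝ → ℝ
  | 0, _ => 1
  | 1, x => x
  | n + 2, x => 2 * x * chebT (n + 1) x - chebT n x

open Polynomial

theorem chebT_eq_eval (n : ℕ) (x : ℝ) : chebT n x = (Chebyshev.T ℝ n).eval x := by
  induction n using Nat.twoStepInduction with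
  | zero => simp [chebT]
  | one => simp [chebT]
  | more n ih1 ih2 =>
    rw [chebT, ih1, ih2]
    push_cast
    simp [Chebyshev.T_add_two]

theorem chebT_cos (n : ℕ) (θ : ℝ) : chebT n (Real.cos θ) = Real.cos (n * θ) := by
  rw [chebT_eq_eval, Chebyshev.T_real_cos]; simp

theorem chebT_joukowski (n : ℕ) {z : ℝ} (hz : z ≠ 0) :
    chebT n ((z + z⁻¹) / 2) = (z ^ n + z⁻¹ ^ n) / 2 := by
  induction n using Nat.twoStepInduction with
  | zero => simp [chebT]
  | one => simp [chebT]
  | more n ih1 ih2 =>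
    rw [chebT, ih1, ih2]
    have h : z * z⁻¹ = 1 := mul_inv_cancel₀ hz
    linear_combination (-(z ^ n + z⁻¹ ^ n) / 2 + (z ^ n + z⁻¹ ^ n) ) * h

/-- The terms of a double sum weighted by `g |i - j|`, grouped along the diagonals `|i - j| = m`. -/
theorem sum_sum_dist (p g : ℕ → ℝ) (k : ℕ) :
    ∑ i ∈ Finset.range k, ∑ j ∈ Finset.range k, p i * p j * g (Nat.dist i j) =
      (∑ i ∈ Finset.range k, p i ^ 2) * g 0 +
        ∑ m ∈ Finset.Icc 1 (k - 1),
          (2 * ∑ i ∈ Finset.range (k - m), p i * p (i + m)) * g m := by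
  -- Shifting the index makes the range of `m` grow with `k`; the extra term is an empty sum.
  have hIcc : ∀ k : ℕ, ∑ m ∈ Finset.Icc 1 (k - 1),
          (2 * ∑ i ∈ Finset.range (k - m), p i * p (i + m)) * g m =
        ∑ m ∈ Finset.range k,
          (2 * ∑ i ∈ Finset.range (k - (m + 1)), p i * p (i + (m + 1))) * g (m + 1) := by
    intro k
    cases k with
    | zero => simp
    | succ n =>
      rw [Finset.sum_range_succ, Finset.range_eq_Ico,
        Finset.sum_Ico_add' (fun m => (2 * ∑ i ∈ Finset.range (n + 1 - m), p i * p (i + m)) * g m)]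
      simp [Finset.Ico_add_one_right_eq_Icc]
  rw [hIcc]
  induction k with
  | zero => simp
  | succ n ih =>
    have hcol : ∑ i ∈ Finset.range n, p i * p n * g (Nat.dist i n) =
        ∑ m ∈ Finset.range n, p (n - (m + 1)) * p n * g (m + 1) := by
      rw [← Finset.sum_range_reflect]
      refine Finset.sum_congr rfl fun m hm => ?_
      have := Finset.mem_range.1 hm
      rw [show n - 1 - m = n - (m + 1) by omega, Nat.dist_eq_sub_of_le (by omega),
        show n - (n - (m + 1)) = m + 1 by omega]
    have hrow : ∑ j ∈ Finset.range n, p n * p j * g (Nat.dist n j) =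
        ∑ i ∈ Finset.range n, p i * p n * g (Nat.dist i n) :=
      Finset.sum_congr rfl fun j _ => by rw [Nat.dist_comm]; ring
    have hstep : ∑ m ∈ Finset.range (n + 1),
          (2 * ∑ i ∈ Finset.range (n + 1 - (m + 1)), p i * p (i + (m + 1))) * g (m + 1) =
        ∑ m ∈ Finset.range n,
          (2 * ∑ i ∈ Finset.range (n - (m + 1)), p i * p (i + (m + 1))) * g (m + 1) +
        2 * ∑ m ∈ Finset.range n, p (n - (m + 1)) * p n * g (m + 1) := by
      rw [Finset.sum_range_succ]
      simp only [Nat.sub_self, Finset.range_zero, Finset.sum_empty, mul_zero, zero_mul, add_zero]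
      rw [Finset.mul_sum (f := fun m => p (n - (m + 1)) * p n * g (m + 1)),
        ← Finset.sum_add_distrib]
      refine Finset.sum_congr rfl fun m hm => ?_
      have := Finset.mem_range.1 hm
      rw [show n + 1 - (m + 1) = (n - (m + 1)) + 1 by omega, Finset.sum_range_succ,
        show n - (m + 1) + (m + 1) = n by omega]
      ring
    rw [Finset.sum_range_succ, Finset.sum_range_succ, hrow, hcol, hstep]
    simp only [Finset.sum_range_succ _ n, Finset.sum_add_distrib]
    rw [ih, hcol, Nat.dist_self]
    ring

theorem chebT_sum_cos (p : ℕ → ℝ) (k : ℕ) (θ : ℝ) :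
    ∑ i ∈ Finset.range k, ∑ j ∈ Finset.range k, p i * p j * chebT (Nat.dist i j) (Real.cos θ) =
      (∑ i ∈ Finset.range k, p i * Real.cos (i * θ)) ^ 2 +
        (∑ i ∈ Finset.range k, p i * Real.sin (i * θ)) ^ 2 := by
  rw [sq, sq, Finset.sum_mul_sum, Finset.sum_mul_sum, ← Finset.sum_add_distrib]
  refine Finset.sum_congr rfl fun i _ => ?_
  rw [← Finset.sum_add_distrib]
  refine Finset.sum_congr rfl fun j _ => ?_
  have h : Real.cos ((Nat.dist i j : ℕ) * θ) = Real.cos (i * θ - j * θ) := by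
    rcases le_total i j with hij | hij
    · rw [Nat.dist_eq_sub_of_le hij, Nat.cast_sub hij, ← Real.cos_neg]
      ring_nf
    · rw [Nat.dist_eq_sub_of_le_right hij, Nat.cast_sub hij]
      ring_nf
  rw [chebT_cos, h, Real.cos_sub]
  ring

theorem chebT_sum_joukowski (p : ℕ → ℝ) (k : ℕ) {z : ℝ} (hz : z ≠ 0) :
    ∑ i ∈ Finset.range k, ∑ j ∈ Finset.range k,
        p i * p j * chebT (Nat.dist i j) ((z + z⁻¹) / 2) =
      (∑ i ∈ Finset.range k, p i * z ^ i) * ∑ i ∈ Finset.range k, p i * z⁻¹ ^ i := by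
  have h1 : ∀ i j : ℕ, i ≤ j → z ^ i * z⁻¹ ^ j = z⁻¹ ^ (j - i) := by
    intro i j hij
    obtain ⟨d, rfl⟩ := Nat.exists_eq_add_of_le hij
    rw [pow_add, ← mul_assoc, ← mul_pow, mul_inv_cancel₀ hz]; simp
  have h2 : ∀ i j : ℕ, i ≤ j → z ^ j * z⁻¹ ^ i = z ^ (j - i) := by
    intro i j hij
    obtain ⟨d, rfl⟩ := Nat.exists_eq_add_of_le hij
    rw [pow_add, mul_right_comm, ← mul_pow, mul_inv_cancel₀ hz]; simp
  have key : ∀ i j : ℕ, chebT (Nat.dist i j) ((z + z⁻¹) / 2) =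
      (z ^ i * z⁻¹ ^ j + z ^ j * z⁻¹ ^ i) / 2 := by
    intro i j
    rw [chebT_joukowski _ hz]
    rcases le_total i j with hij | hij
    · rw [Nat.dist_eq_sub_of_le hij, h1 i j hij, h2 i j hij, add_comm]
    · rw [Nat.dist_eq_sub_of_le_right hij, h1 j i hij, h2 j i hij]
  have hA : ∑ i ∈ Finset.range k, ∑ j ∈ Finset.range k, (p i * z ^ i) * (p j * z⁻¹ ^ j) =
      (∑ i ∈ Finset.range k, p i * z ^ i) * ∑ i ∈ Finset.range k, p i * z⁻¹ ^ i := by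
    rw [Finset.sum_mul_sum]
  have hB : ∑ i ∈ Finset.range k, ∑ j ∈ Finset.range k, (p j * z ^ j) * (p i * z⁻¹ ^ i) =
      (∑ i ∈ Finset.range k, p i * z ^ i) * ∑ i ∈ Finset.range k, p i * z⁻¹ ^ i := by
    rw [Finset.sum_comm, hA]
  have hAB : ∑ i ∈ Finset.range k, ∑ j ∈ Finset.range k,
        p i * p j * chebT (Nat.dist i j) ((z + z⁻¹) / 2) =
      (∑ i ∈ Finset.range k, ∑ j ∈ Finset.range k, (p i * z ^ i) * (p j * z⁻¹ ^ j) +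
        ∑ i ∈ Finset.range k, ∑ j ∈ Finset.range k, (p j * z ^ j) * (p i * z⁻¹ ^ i)) / 2 := by
    simp only [← Finset.sum_add_distrib, Finset.sum_div]
    refine Finset.sum_congr rfl fun i _ => Finset.sum_congr rfl fun j _ => ?_
    rw [key]; ring
  rw [hAB, hA, hB]; ring

/-- `q` has degree at most `n` and is a spectral factor of `f`: `f((z + 1/z)/2) = q(z) q(1/z)`.
Requiring this at real `z ≠ 0` determines `f`, and by analyticity the identity extends to `z` on the
unit circle, where it reads `f(cos θ) = |q(e ^ {iθ})|²`. -/
def SpectralFactor (n : ℕ) (f q : ℝ[X]) : Prop :=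
  q.natDegree ≤ n ∧ ∀ z : ℝ, z ≠ 0 → f.eval ((z + z⁻¹) / 2) = q.eval z * q.eval z⁻¹

theorem SpectralFactor.mul {n m : ℕ} {f g q r : ℝ[X]} (hf : SpectralFactor n f q)
    (hg : SpectralFactor m g r) : SpectralFactor (n + m) (f * g) (q * r) :=
  ⟨natDegree_mul_le_of_le hf.1 hg.1, fun z hz => by
    rw [eval_mul, eval_mul, eval_mul, hf.2 z hz, hg.2 z hz]; ring⟩

theorem spectralFactor_C {c : ℝ} (hc : 0 ≤ c) : SpectralFactor 0 (C c) (C √c) :=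
  ⟨by simp, fun z _ => by simp [hc]⟩

/-- A linear factor that is nonnegative on `[-1, 1]`: `a - x` for `a ≥ 1` when `ε = 1`, and `x - a`
for `a ≤ -1` when `ε = -1`. -/
theorem exists_spectralFactor_linear {a ε : ℝ} (hε : ε ^ 2 = 1) (ha : 1 ≤ ε * a) :
    ∃ q, SpectralFactor 1 (C ε * (C a - X)) q := by
  set b := ε * a with hb
  have hs : √(b ^ 2 - 1) ^ 2 = b ^ 2 - 1 := Real.sq_sqrt (by nlinarith)
  set v := b + √(b ^ 2 - 1) with hv
  have hv0 : 0 < v := by have := Real.sqrt_nonneg (b ^ 2 - 1); linarith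
  have hvv : v ^ 2 - 2 * b * v + 1 = 0 := by rw [hv]; linear_combination hs
  have hw : √(2 * v) ^ 2 = 2 * v := Real.sq_sqrt (by linarith)
  have hw0 : √(2 * v) ≠ 0 := by positivity
  refine ⟨C (√(2 * v))⁻¹ * (X - C (ε * v)), ?_, fun z hz => ?_⟩
  · exact (natDegree_C_mul_le _ _).trans (natDegree_X_sub_C_le _)
  · simp only [eval_mul, eval_C, eval_sub, eval_X]
    have : (√(2 * v))⁻¹ * (z - ε * v) * ((√(2 * v))⁻¹ * (z⁻¹ - ε * v)) =
        (z - ε * v) * (z⁻¹ - ε * v) / √(2 * v) ^ 2 := by field_simp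
    rw [this, hw, eq_div_iff (by positivity)]
    have hzz : z * z⁻¹ = 1 := mul_inv_cancel₀ hz
    linear_combination (-1 : ℝ) * hzz - hvv - v ^ 2 * hε

/-- The quadratic `(x - w)(x - w̄)` has the spectral factor `(z - v)(z - v̄) / (2|v|)`, where
`(v + 1/v)/2 = w`. A real `w` is allowed. -/
theorem exists_spectralFactor_quadratic (w : ℂ) :
    ∃ q, SpectralFactor 2 (X ^ 2 - C (2 * w.re) * X + C (‖w‖ ^ 2)) q := by
  obtain ⟨v, hv⟩ : ∃ v : ℂ, v ^ 2 - 2 * w * v + 1 = 0 := by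
    obtain ⟨u, hu⟩ := IsAlgClosed.exists_pow_nat_eq (w ^ 2 - 1) (n := 2) (by norm_num)
    exact ⟨w + u, by linear_combination hu⟩
  have hv0 : v ≠ 0 := by rintro rfl; simp at hv
  have hw : w = (v + v⁻¹) / 2 := by field_simp; linear_combination -hv
  have hr0 : 0 < Complex.normSq v := Complex.normSq_pos.2 hv0
  have hre : w.re = (v.re + v.re / Complex.normSq v) / 2 := by
    rw [hw]; simp
  have him : w.im = (v.im - v.im / Complex.normSq v) / 2 := by
    rw [hw]; simp; ring
  have hs : √(Complex.normSq v) ^ 2 = Complex.normSq v := Real.sq_sqrt hr0.le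
  refine ⟨C (2 * √(Complex.normSq v))⁻¹ *
      (X ^ 2 - C (2 * v.re) * X + C (Complex.normSq v)), ?_, fun z hz => ?_⟩
  · compute_degree
  · simp only [eval_mul, eval_C, eval_add, eval_sub, eval_pow, eval_X]
    rw [Complex.sq_norm, Complex.normSq_apply w, hre, him]
    have hsplit : ∀ s A B : ℝ, (2 * s)⁻¹ * A * ((2 * s)⁻¹ * B) = A * B / (4 * s ^ 2) := by
      intro s A B
      rw [mul_inv, div_eq_mul_inv, mul_inv, ← inv_pow]; ring
    rw [hsplit, hs]
    have hn := Complex.normSq_apply v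
    generalize Complex.normSq v = r at *
    have hd : v.im ^ 2 = r - v.re ^ 2 := by rw [hn]; ring
    field_simp
    ring_nf
    rw [hd]
    ring

/-- Nonnegativity on `[-1, 1]` passes to a cofactor of a nonnegative factor: it is clear off the
finitely many roots of `a`, and extends to them by continuity. -/
theorem nonneg_of_mul_nonneg {a g : ℝ[X]} (ha : a ≠ 0)
    (ha' : ∀ x ∈ Set.Icc (-1 : ℝ) 1, 0 ≤ a.eval x)
    (h : ∀ x ∈ Set.Icc (-1 : ℝ) 1, 0 ≤ (a * g).eval x) :
    ∀ x ∈ Set.Icc (-1 : ℝ) 1, 0 ≤ g.eval x := by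
  have hfin : {x | a.IsRoot x}.Finite := finite_setOfPred_isRoot ha
  have hd : Dense {x | a.IsRoot x}ᶜ := hfin.countable.dense_compl ℝ
  have hcl : Set.Icc (-1 : ℝ) 1 ⊆ closure (Set.Ioo (-1 : ℝ) 1 ∩ {x | a.IsRoot x}ᶜ) := by
    rw [← closure_Ioo (by norm_num : (-1 : ℝ) ≠ 1)]
    exact closure_minimal (hd.open_subset_closure_inter isOpen_Ioo) isClosed_closure
  intro x hx
  refine closure_minimal (t := {x | 0 ≤ g.eval x}) ?_
    (isClosed_le continuous_const g.continuous) (hcl hx)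
  rintro y ⟨hy, hya⟩
  have hy' := Set.Ioo_subset_Icc_self hy
  have hpos : 0 < a.eval y := lt_of_le_of_ne (ha' y hy') (Ne.symm hya)
  have := h y hy'
  rw [eval_mul] at this
  exact nonneg_of_mul_nonneg_right this hpos

/-- A root inside `(-1, 1)` of a polynomial that is nonnegative on `[-1, 1]` is at least double:
the cofactor changes sign there. -/
theorem isRoot_of_interior_root {g : ℝ[X]} {a : ℝ} (ha : -1 < a) (ha' : a < 1)
    (h : ∀ x ∈ Set.Icc (-1 : ℝ) 1, 0 ≤ ((X - C a) * g).eval x) : g.IsRoot a := by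
  have hc : IsClosed {x | 0 ≤ g.eval x} := isClosed_le continuous_const g.continuous
  have hc' : IsClosed {x | g.eval x ≤ 0} := isClosed_le g.continuous continuous_const
  refine le_antisymm ?_ ?_
  · refine closure_minimal (s := Set.Ioo (-1) a) ?_ hc' ?_
    · intro x hx
      have := h x ⟨hx.1.le, by linarith [hx.2]⟩
      simp only [eval_mul, eval_sub, eval_X, eval_C] at this
      exact nonpos_of_mul_nonneg_right this (by linarith [hx.2])
    · rw [closure_Ioo ha.ne]; exact ⟨ha.le, le_rfl⟩
  · refine closure_minimal (s := Set.Ioo a 1) ?_ hc ?_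
    · intro x hx
      have := h x ⟨by linarith [hx.1], hx.2.le⟩
      simp only [eval_mul, eval_sub, eval_X, eval_C] at this
      exact nonneg_of_mul_nonneg_right this (by linarith [hx.1])
    · rw [closure_Ioo ha'.ne]; exact ⟨le_rfl, ha'.le⟩

/-- The inductive step: a nonconstant polynomial that is nonnegative on `[-1, 1]` has a nonconstant
factor that is nonnegative there and has a spectral factor. -/
theorem exists_nonneg_factor {f : ℝ[X]} (hdeg : f.natDegree ≠ 0)
    (h : ∀ x ∈ Set.Icc (-1 : ℝ) 1, 0 ≤ f.eval x) :
    ∃ a g : ℝ[X], f = a * g ∧ a.natDegree ≠ 0 ∧ (∀ x ∈ Set.Icc (-1 : ℝ) 1, 0 ≤ a.eval x) ∧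
      ∃ q, SpectralFactor a.natDegree a q := by
  have quad : ∀ w : ℂ, X ^ 2 - C (2 * w.re) * X + C (‖w‖ ^ 2) ∣ f →
      ∃ a g : ℝ[X], f = a * g ∧ a.natDegree ≠ 0 ∧ (∀ x ∈ Set.Icc (-1 : ℝ) 1, 0 ≤ a.eval x) ∧
        ∃ q, SpectralFactor a.natDegree a q := by
    rintro w ⟨g, hg⟩
    have hd : (X ^ 2 - C (2 * w.re) * X + C (‖w‖ ^ 2)).natDegree = 2 := by
      compute_degree!
    refine ⟨_, g, hg, by rw [hd]; norm_num, fun x _ => ?_, ?_⟩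
    · simp only [eval_add, eval_sub, eval_mul, eval_pow, eval_X, eval_C]
      rw [Complex.sq_norm, Complex.normSq_apply]
      nlinarith [sq_nonneg (x - w.re), sq_nonneg w.im]
    · rw [hd]; exact exists_spectralFactor_quadratic w
  have lin : ∀ a ε : ℝ, ε ^ 2 = 1 → 1 ≤ ε * a → f.IsRoot a →
      ∃ a g : ℝ[X], f = a * g ∧ a.natDegree ≠ 0 ∧ (∀ x ∈ Set.Icc (-1 : ℝ) 1, 0 ≤ a.eval x) ∧
        ∃ q, SpectralFactor a.natDegree a q := by
    intro a ε hε ha hroot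
    obtain ⟨g, hg⟩ := dvd_iff_isRoot.2 hroot
    have hε0 : ε ≠ 0 := by rintro rfl; norm_num at hε
    have hd : (C ε * (C a - X)).natDegree = 1 := by
      rw [natDegree_C_mul hε0, ← neg_sub, natDegree_neg, natDegree_X_sub_C]
    refine ⟨C ε * (C a - X), C (-ε) * g, ?_, by rw [hd]; norm_num, fun x hx => ?_, ?_⟩
    · have : C ε * C ε = (1 : ℝ[X]) := by rw [← C_mul, ← sq, hε, C_1]
      rw [hg, C_neg]
      linear_combination (-(X - C a) * g) * this
    · simp only [eval_mul, eval_C, eval_sub, eval_X]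
      rcases sq_eq_sq_iff_eq_or_eq_neg.1 (hε.trans (one_pow 2).symm) with rfl | rfl <;> linarith [hx.1, hx.2]
    · rw [hd]; exact exists_spectralFactor_linear hε ha
  obtain ⟨w, hw⟩ : ∃ w : ℂ, aeval w f = 0 :=
    IsAlgClosed.exists_aeval_eq_zero _ f fun h0 => hdeg (natDegree_eq_of_degree_eq_some h0)
  by_cases him : w.im = 0
  · have hwr : w = ((w.re : ℝ) : ℂ) := Complex.ext rfl (by simpa using him)
    generalize w.re = a at hwr
    subst hwr
    have hroot : f.IsRoot a := by
      have : ((f.eval a : ℝ) : ℂ) = 0 := by rw [← hw]; exact (aeval_ofReal ..).symm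
      exact_mod_cast this
    rcases le_or_gt 1 a with h1 | h1
    · exact lin a 1 (by norm_num) (by linarith) hroot
    rcases le_or_gt a (-1) with h2 | h2
    · exact lin a (-1) (by norm_num) (by linarith) hroot
    obtain ⟨g, rfl⟩ := dvd_iff_isRoot.2 hroot
    obtain ⟨g', rfl⟩ := dvd_iff_isRoot.2 (isRoot_of_interior_root h2 h1 h)
    refine quad a ⟨g', ?_⟩
    rw [Complex.sq_norm, Complex.normSq_apply]
    simp only [Complex.ofReal_re, Complex.ofReal_im, C_mul, mul_zero, add_zero]
    rw [show (C 2 : ℝ[X]) = 2 from rfl]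
    ring
  · exact quad w (quadratic_dvd_of_aeval_eq_zero_im_ne_zero f hw him)

/-- The Fejér–Riesz theorem for real polynomials in `x = cos θ`. -/
theorem exists_spectralFactor (n : ℕ) : ∀ f : ℝ[X], f.natDegree = n →
    (∀ x ∈ Set.Icc (-1 : ℝ) 1, 0 ≤ f.eval x) → ∃ q, SpectralFactor n f q := by
  induction n using Nat.strong_induction_on with
  | _ n ih =>
  intro f hf h
  by_cases hn : n = 0
  · subst hn
    rw [eq_C_of_natDegree_eq_zero hf] at h ⊢
    exact ⟨_, spectralFactor_C (by simpa using h 0 (by norm_num))⟩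
  · obtain ⟨a, g, rfl, ha, ha', q, hq⟩ := exists_nonneg_factor (hf ▸ hn) h
    have hf0 : a * g ≠ 0 := by rintro h0; rw [h0] at hf; exact hn (by simpa using hf.symm)
    have hd := natDegree_mul (left_ne_zero_of_mul hf0) (right_ne_zero_of_mul hf0)
    obtain ⟨r, hr⟩ := ih g.natDegree (by omega) g rfl
      (nonneg_of_mul_nonneg (left_ne_zero_of_mul hf0) ha' h)
    refine ⟨q * r, ?_⟩
    rw [← hf, hd]
    exact hq.mul hr

theorem eq_zero_of_sum_chebT {k : ℕ} {c : ℕ → ℝ}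
    (h : ∀ x : ℝ, 1 ≤ x → ∑ m ∈ Finset.range k, c m * chebT m x = 0) :
    ∀ m ∈ Finset.range k, c m = 0 := by
  have h0 : ∑ m ∈ Finset.range k, c m • Chebyshev.T ℝ m = 0 := by
    refine eq_zero_of_infinite_isRoot _ ((Set.Ici_infinite (1 : ℝ)).mono fun x hx => ?_)
    simpa [IsRoot, eval_finsetSum, chebT_eq_eval] using h x hx
  exact linearIndependent_iff'.1 (Chebyshev.chebyshevTsequence ℝ).linearIndependent _ _ h0

/-- Limiting case `γ = 0`: there is `p ∈ ℝ^k` with `Σ_i p_i² = s_0` and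
`2 Σ_i p_i p_{i+m} = s_m` for `m = 1, …, k−1` if and only if
`Σ_{m=0}^{k−1} s_m T_m(x) ≥ 0` for all `x ∈ [−1,1]`. -/
theorem stmt8 (k : ℕ) (hk : 2 ≤ k) (s : ℕ → ℝ) :
    (∃ p : ℕ → ℝ,
        (∑ i ∈ Finset.range k, (p i) ^ 2 = s 0) ∧
        ∀ m ∈ Finset.Icc 1 (k - 1),
          2 * ∑ i ∈ Finset.range (k - m), p i * p (i + m) = s m) ↔
      ∀ x ∈ Set.Icc (-1 : ℝ) 1, 0 ≤ ∑ m ∈ Finset.range k, s m * chebT m x := by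
  have hsplit : ∀ t : ℕ → ℝ, ∑ m ∈ Finset.range k, t m = t 0 + ∑ m ∈ Finset.Icc 1 (k - 1), t m := by
    intro t
    rw [Finset.range_eq_Ico, Finset.sum_eq_sum_Ico_succ_bot (by omega),
      ← Finset.Ico_add_one_right_eq_Icc, show k - 1 + 1 = k by omega]
  constructor
  · rintro ⟨p, hp0, hp⟩ x hx
    have hsum := sum_sum_dist p (fun m => chebT m x) k
    rw [hp0, Finset.sum_congr (g := fun m => s m * chebT m x) (s₁ := Finset.Icc 1 (k - 1)) rfl
      fun m hm => by rw [hp m hm]] at hsum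
    rw [hsplit, ← hsum, ← Real.cos_arccos hx.1 hx.2, chebT_sum_cos]
    positivity
  · intro h
    set f : ℝ[X] := ∑ m ∈ Finset.range k, C (s m) * Chebyshev.T ℝ m with hf
    have hfe : ∀ x, f.eval x = ∑ m ∈ Finset.range k, s m * chebT m x := fun x => by
      simp [hf, eval_finsetSum, chebT_eq_eval]
    have hfd : f.natDegree < k := by
      refine Nat.lt_of_le_sub_one (by omega) (natDegree_sum_le_of_forall_le _ _ fun m hm => ?_)
      refine (natDegree_C_mul_le _ _).trans ?_
      rw [Chebyshev.natDegree_T]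
      have := Finset.mem_range.1 hm
      simp; omega
    obtain ⟨q, hqd, hq⟩ := exists_spectralFactor _ f rfl fun x hx => by rw [hfe]; exact h x hx
    -- `r` is the right-hand side that the coefficients of `q` do produce.
    set r : ℕ → ℝ := fun m => if m = 0 then ∑ i ∈ Finset.range k, q.coeff i ^ 2
      else 2 * ∑ i ∈ Finset.range (k - m), q.coeff i * q.coeff (i + m) with hr
    have hrm : ∀ m ∈ Finset.Icc 1 (k - 1),
        r m = 2 * ∑ i ∈ Finset.range (k - m), q.coeff i * q.coeff (i + m) := fun m hm => by
      have := Finset.mem_Icc.1 hm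
      simp only [hr]; rw [if_neg (by omega)]
    have hsr : ∀ m ∈ Finset.range k, s m - r m = 0 := by
      refine eq_zero_of_sum_chebT fun x hx => ?_
      obtain ⟨z, hz, rfl⟩ : ∃ z : ℝ, z ≠ 0 ∧ x = (z + z⁻¹) / 2 := by
        have hs : √(x ^ 2 - 1) ^ 2 = x ^ 2 - 1 := Real.sq_sqrt (by nlinarith)
        have hz : x + √(x ^ 2 - 1) ≠ 0 := by positivity
        refine ⟨_, hz, ?_⟩
        field_simp
        linear_combination -hs
      have hsum := sum_sum_dist q.coeff (fun m => chebT m ((z + z⁻¹) / 2)) k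
      rw [chebT_sum_joukowski _ _ hz, ← eval_eq_sum_range' (by omega) z,
        ← eval_eq_sum_range' (by omega) z⁻¹, ← hq z hz, hfe] at hsum
      simp only [sub_mul, Finset.sum_sub_distrib]
      rw [hsum, hsplit (fun m => r m * _), sub_eq_zero]
      congr 1
      exact Finset.sum_congr rfl fun m hm => by rw [hrm m hm]
    refine ⟨q.coeff, ?_, fun m hm => ?_⟩
    · have := hsr 0 (by simp; omega)
      simp only [hr, if_true] at this
      linarith
    · rw [← hrm m hm]
      have := hsr m (by have := Finset.mem_Icc.1 hm; simp; omega)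
      linarith
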